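/- Let d ∈ (−1, 0), λ_N > 0 with λ_N → 0 and Nλ_N → λ* ∈ [0, ∞), and let b_d(k) satisfy b_d(k) ~ (1/Γ(d)) k^{d−1} and Σ_{k=0}^∞ b_d(k) = 0. Then for each fixed y ∈ ℝ, (λ_N + iy/N)^d Σ_{k=0}^∞ e^{−(λ_N + iy/N)k} b_d(k) → 1 as N → ∞. -/

import Mathlib

open Real Filter Topology Complex

noncomputable def coefA (d : ℝ) (k : ℕ) : ℝ := (∏ j ∈ Finset.range k, (d + j)) / (k.factorial : ℝ)

lemma coefA_zero (d : ℝ) : coefA d 0 = 1 := by simp [coefA]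

lemma coefA_succ (d : ℝ) (k : ℕ) : ((k : ℝ) + 1) * coefA d (k+1) = (d + k) * coefA d k := by
  have h : (k.factorial : ℝ) ≠ 0 := by positivity
  have h2 : ((k : ℝ) + 1) ≠ 0 := by positivity
  simp only [coefA, Finset.prod_range_succ, Nat.factorial_succ]
  push_cast
  field_simp

lemma coefA_neg (d : ℝ) (hd1 : -1 < d) (hd0 : d < 0) (k : ℕ) : coefA d (k+1) < 0 := by
  induction k with
  | zero => simpa [coefA] using hd0
  | succ n ih =>
    have h := coefA_succ d (n+1)
    push_cast at h
    have h1 : (d + ((n:ℝ)+1)) * coefA d (n+1) < 0 := mul_neg_of_pos_of_neg (by linarith [(Nat.cast_nonneg n : (0:ℝ) ≤ n)]) ih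
    rw [← h] at h1
    by_contra hc
    push Not at hc
    have : 0 ≤ ((n:ℝ)+1+1) * coefA d (n+1+1) := by positivity
    linarith

lemma coefA_sum (d : ℝ) (hd0 : d < 0) (n : ℕ) :
    ∑ k ∈ Finset.range n, coefA d k = n * coefA d n / d := by
  induction n with
  | zero => simp
  | succ n ih =>
    rw [Finset.sum_range_succ, ih]
    push_cast
    rw [coefA_succ]
    have := hd0.ne
    field_simp
    ring

lemma coefA_tendsto (d : ℝ) (hd1 : -1 < d) (hd0 : d < 0) :
    Tendsto (fun k : ℕ => coefA d k / ((1 / Real.Gamma d) * (k : ℝ) ^ (d - 1))) atTop (𝓝 1) := by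
  have hG : Real.Gamma d ≠ 0 := by
    apply Real.Gamma_ne_zero
    intro m hm
    rcases Nat.eq_zero_or_pos m with h | h
    · subst h; simp at hm; linarith
    · have : (1:ℝ) ≤ m := by exact_mod_cast h
      linarith
  have h1 := Real.GammaSeq_tendsto_Gamma d
  have h2 : Tendsto (fun k : ℕ => (k:ℝ) / (d + k)) atTop (𝓝 1) := by
    have := tendsto_natCast_div_add_atTop d
    simpa [add_comm] using this
  have h3 := (h1.inv₀ hG).mul h2 |>.const_mul (Real.Gamma d)
  have : Real.Gamma d * ((Real.Gamma d)⁻¹ * 1) = 1 := by field_simp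
  rw [this] at h3
  refine h3.congr' ?_
  filter_upwards [eventually_gt_atTop 0] with k hk
  have hk' : (1:ℝ) ≤ k := by exact_mod_cast hk
  have e1 : d + k ≠ 0 := by linarith
  have e2 : ((k:ℝ)) ^ d ≠ 0 := by positivity
  have e3 : (k.factorial : ℝ) ≠ 0 := by positivity
  rw [Real.GammaSeq, coefA, Finset.prod_range_succ, Real.rpow_sub_one (by positivity)]
  field_simp

lemma coefA_hasSum (d : ℝ) (x : ℂ) (hx : ‖x‖ < 1) :
    HasSum (fun k => (coefA d k : ℂ) * x ^ k) ((1 - x) ^ (-(d:ℂ))) := by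
  have h := (Complex.one_div_one_sub_cpow_hasFPowerSeriesOnBall_zero (d:ℂ)).hasSum (y := x)
    (by
      rw [Metric.mem_eball, edist_zero_right, ← ofReal_norm]
      exact ENNReal.ofReal_lt_one.2 hx)
  have e : ∀ n : ℕ, Ring.choose ((d:ℂ) + n - 1) n = (coefA d n : ℂ) := by
    intro n
    rw [← Ring.multichoose_eq]
    have := Ring.factorial_nsmul_multichoose_eq_ascPochhammer (d:ℂ) n
    have e3 : (n.factorial : ℂ) ≠ 0 := by exact_mod_cast n.factorial_ne_zero
    have h5 : (ascPochhammer ℕ n).smeval (d:ℂ) = ∏ j ∈ Finset.range n, ((d:ℂ) + j) := by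
      clear this e3
      rw [Polynomial.ascPochhammer_smeval_eq_eval]
      induction n with
      | zero => simp
      | succ n ih => rw [ascPochhammer_succ_eval, ih, Finset.prod_range_succ]
    rw [h5, nsmul_eq_mul] at this
    rw [coefA]; push_cast
    rw [← this]; field_simp
  simpa [e, FormalMultilinearSeries.ofScalars, Complex.cpow_neg, smul_eq_mul] using h

lemma exp_bound (z : ℂ) (hz : 0 ≤ z.re) :
    ‖Complex.exp (-z) - 1‖ ≤ 3 * (1 - Real.exp (-‖z‖)) ∧ ‖Complex.exp (-z) - 1‖ ≤ ‖z‖ := by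
  have h2 : ‖Complex.exp (-z) - 1‖ ≤ 2 := by
    refine (norm_sub_le _ _).trans ?_
    rw [Complex.norm_exp]
    have : Real.exp (-z).re ≤ 1 := by simpa using hz
    rw [norm_one]
    linarith
  have h1 : ‖Complex.exp (-z) - 1‖ ≤ ‖z‖ := by
    have hc : Convex ℝ {w : ℂ | 0 ≤ w.re} := convex_halfSpace_re_ge 0
    have := hc.norm_image_sub_le_of_norm_hasDerivWithin_le (f := fun w => Complex.exp (-w))
      (f' := fun w => Complex.exp (-w) * (-1)) (C := 1) (x := 0) (y := z)
      (fun w hw => ((hasDerivAt_neg w).cexp).hasDerivWithinAt)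
      (fun w hw => by simpa [Complex.norm_exp] using hw) (by simp) hz
    simpa using this
  refine ⟨?_, h1⟩
  set r := ‖z‖
  have hr : 0 ≤ r := norm_nonneg z
  have h3 : Real.exp (-r) ≤ 1 / (1 + r) := by
    rw [Real.exp_neg, inv_eq_one_div]
    apply one_div_le_one_div_of_le (by positivity)
    linarith [Real.add_one_le_exp r]
  have h4 : 3 * (1 - 1/(1+r)) = 3 * r / (1+r) := by field_simp; ring
  refine le_trans ?_ (le_trans h4.ge (by linarith))
  rw [le_div_iff₀ (by positivity)]
  rcases le_total r 2 with h | h <;> nlinarith [norm_nonneg (Complex.exp (-z) - 1)]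

lemma coefA_facts (d : ℝ) (hd1 : -1 < d) (hd0 : d < 0) (b : ℕ → ℝ)
    (hb : Tendsto (fun k : ℕ => b k / ((1 / Real.Gamma d) * (k : ℝ) ^ (d - 1)))
      atTop (nhds 1)) (hsum : Summable b) :
    HasSum (coefA d) 0 ∧ (fun k => b k - coefA d k) =o[atTop] coefA d := by
  have ha := coefA_tendsto d hd1 hd0
  have hne : ∀ k, coefA d k ≠ 0 := by
    intro k
    cases k with
    | zero => simp [coefA_zero]
    | succ n => exact (coefA_neg d hd1 hd0 n).ne
  have hq : Tendsto (fun k => b k / coefA d k) atTop (𝓝 1) := by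
    have h := hb.div ha one_ne_zero
    rw [div_one] at h
    refine h.congr' ?_
    filter_upwards [ha.eventually_ne one_ne_zero] with k hk
    have : ((1 / Real.Gamma d) * (k : ℝ) ^ (d - 1)) ≠ 0 := by
      intro h0; rw [h0, div_zero] at hk; exact hk rfl
    simp only [Pi.div_apply]
    rw [div_div_div_cancel_right₀ this]
  have heq : Asymptotics.IsEquivalent atTop b (coefA d) :=
    (Asymptotics.isEquivalent_iff_tendsto_one (Eventually.of_forall hne)).2 hq
  have hs : Summable (coefA d) := summable_of_isBigO_nat hsum.norm heq.symm.isBigO.norm_right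
  refine ⟨?_, heq.isLittleO⟩
  have h1 : Tendsto (fun n : ℕ => (n:ℝ) * coefA d n / d) atTop (𝓝 0) := by
    have hp : Tendsto (fun k : ℕ => (k:ℝ) ^ d) atTop (𝓝 0) := by
      have := (tendsto_rpow_neg_atTop (y := -d) (by linarith)).comp
        (tendsto_natCast_atTop_atTop (R := ℝ))
      simpa [Function.comp_def] using this
    have h := (ha.mul hp).mul_const (1 / Real.Gamma d / d)
    rw [mul_zero, zero_mul] at h
    refine h.congr' ?_
    filter_upwards [ha.eventually_ne one_ne_zero, eventually_gt_atTop 0] with k hk hk0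
    have h3 : ((1 / Real.Gamma d) * (k : ℝ) ^ (d - 1)) ≠ 0 := by
      intro h0; rw [h0, div_zero] at hk; exact hk rfl
    have hG : Real.Gamma d ≠ 0 := by
      intro h0; simp [h0] at h3
    have hk' : (0:ℝ) < k := by exact_mod_cast hk0
    have e2 : ((k:ℝ)) ^ d ≠ 0 := by positivity
    have := hd0.ne
    rw [Real.rpow_sub_one hk'.ne']
    field_simp
  have h2 := hs.hasSum.tendsto_sum_nat
  simp only [coefA_sum d hd0] at h2
  have := tendsto_nhds_unique h2 h1
  rw [← this]; exact hs.hasSum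

lemma coefA_real_hasSum (d : ℝ) (hd1 : -1 < d) (hd0 : d < 0) (ha : HasSum (coefA d) 0)
    (r : ℝ) (hr : 0 < r) :
    ∃ S ≤ r ^ (-d), HasSum (fun k : ℕ => (1 - Real.exp (-(r * k))) * |coefA d k|) S := by
  have he : Real.exp (-r) < 1 := by simpa using hr
  have h := coefA_hasSum d (Real.exp (-r) : ℝ) (by
    rw [Complex.norm_real, Real.norm_of_nonneg (Real.exp_pos _).le]; exact he)
  have h' : HasSum (fun k : ℕ => coefA d k * Real.exp (-r) ^ k) ((1 - Real.exp (-r)) ^ (-d)) := by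
    rw [← Complex.hasSum_ofReal]
    push_cast [Complex.ofReal_cpow (show 0 ≤ 1 - Real.exp (-r) by linarith)]
    push_cast at h
    exact h
  refine ⟨(1 - Real.exp (-r)) ^ (-d), ?_, ?_⟩
  · apply Real.rpow_le_rpow (by linarith) _ (by linarith)
    linarith [Real.add_one_le_exp (-r)]
  · have h2 := h'.sub ha
    rw [sub_zero] at h2
    have hfe : (fun k : ℕ => (1 - Real.exp (-(r * k))) * |coefA d k|) =
        fun k => coefA d k * Real.exp (-r) ^ k - coefA d k := by
      funext k
      rw [← Real.exp_nat_mul, show (k:ℝ) * -r = -(r * k) by ring]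
      cases k with
      | zero => simp
      | succ n =>
        rw [abs_of_neg (coefA_neg d hd1 hd0 n)]; ring
    rw [hfe]; exact h2

lemma err_bound (d : ℝ) (hd1 : -1 < d) (hd0 : d < 0) (ha : HasSum (coefA d) 0)
    (e : ℕ → ℝ) (he : HasSum e 0) (ε : ℝ) (hε : 0 ≤ ε) (K : ℕ)
    (hK : ∀ k ≥ K, |e k| ≤ ε * |coefA d k|) (z : ℂ) (hz : 0 < z.re) :
    ‖z ^ (d:ℂ) * ∑' k : ℕ, Complex.exp (-z * k) * (e k : ℂ)‖ ≤
      (∑ k ∈ Finset.range K, k * |e k|) * ‖z‖ ^ (1 + d) + 3 * ε := by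
  have hz0 : z ≠ 0 := by rintro rfl; simp at hz
  set r := ‖z‖ with hrdef
  have hr : 0 < r := norm_pos_iff.2 hz0
  obtain ⟨S, hS, hSum⟩ := coefA_real_hasSum d hd1 hd0 ha r hr
  have heC : HasSum (fun k => (e k : ℂ)) 0 := by
    rw [← Complex.ofReal_zero]; exact Complex.hasSum_ofReal.2 he
  have hre : ∀ k : ℕ, 0 ≤ (z * k).re := by
    intro k; simp; positivity
  have hnorm : ∀ k : ℕ, ‖z * k‖ = r * k := by intro k; simp [hrdef]
  have hbd : ∀ k : ℕ, ‖(Complex.exp (-z * k) - 1) * (e k : ℂ)‖ ≤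
      (if k ∈ Finset.range K then r * (k * |e k|) else 0) +
        3 * ε * ((1 - Real.exp (-(r * k))) * |coefA d k|) := by
    intro k
    obtain ⟨b1, b2⟩ := exp_bound (z * k) (hre k)
    rw [hnorm, ← neg_mul] at b1 b2
    have hnn : 0 ≤ 1 - Real.exp (-(r * k)) := by
      have : 0 ≤ r * k := by positivity
      simpa using this
    rw [norm_mul, Complex.norm_real, Real.norm_eq_abs]
    split_ifs with hk
    · have : ‖Complex.exp (-z * k) - 1‖ * |e k| ≤ r * k * |e k| := by gcongr
      have h0 : 0 ≤ 3 * ε * ((1 - Real.exp (-(r * k))) * |coefA d k|) := by positivity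
      linarith
    · have := hK k (by simpa using hk)
      calc _ ≤ 3 * (1 - Real.exp (-(r * k))) * (ε * |coefA d k|) := by gcongr
        _ = _ := by ring
  have hsF : HasSum (fun k : ℕ => if k ∈ Finset.range K then r * (k * |e k|) else 0)
      (∑ k ∈ Finset.range K, r * (k * |e k|)) := by
    have := hasSum_sum_of_ne_finset_zero (L := SummationFilter.unconditional ℕ) (s := Finset.range K)
      (f := fun k : ℕ => if k ∈ Finset.range K then r * (k * |e k|) else 0)
      (fun k hk => by simp [hk])
    convert this using 1
    exact Finset.sum_congr rfl (fun k hk => by simp [hk])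
  have hT := hsF.add (hSum.mul_left (3 * ε))
  have hsum1 : Summable (fun k : ℕ => (Complex.exp (-z * k) - 1) * (e k : ℂ)) :=
    Summable.of_norm_bounded hT.summable hbd
  have heq : ∑' k : ℕ, Complex.exp (-z * k) * (e k : ℂ) =
      ∑' k : ℕ, (Complex.exp (-z * k) - 1) * (e k : ℂ) := by
    have := hsum1.hasSum.add heC
    rw [add_zero] at this
    rw [← this.tsum_eq]
    congr 1; ext k; ring
  rw [heq, norm_mul, Complex.norm_cpow_real]
  have h1 := tsum_of_norm_bounded hT hbd
  have hrd : r ^ d * r ^ (-d) = 1 := by rw [← Real.rpow_add hr]; simp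
  have hp : 0 < r ^ d := by positivity
  calc _ ≤ r ^ d * (∑ k ∈ Finset.range K, r * (k * |e k|) + 3 * ε * S) := by gcongr
    _ ≤ r ^ d * (∑ k ∈ Finset.range K, r * (k * |e k|) + 3 * ε * r ^ (-d)) := by gcongr
    _ = r ^ d * r * (∑ k ∈ Finset.range K, (k * |e k|)) + 3 * ε * (r ^ d * r ^ (-d)) := by
      rw [← Finset.mul_sum]; ring
    _ = _ := by rw [hrd, add_comm 1 d, Real.rpow_add_one hr.ne']; ring

lemma main_part (d : ℝ) (z : ℕ → ℂ) (hz : ∀ n, 0 < (z n).re) (hz0 : Tendsto z atTop (𝓝 0)) :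
    Tendsto (fun n => z n ^ (d:ℂ) * (1 - Complex.exp (-z n)) ^ (-(d:ℂ))) atTop (𝓝 1) := by
  have hne : ∀ n, z n ≠ 0 := by intro n h; have := hz n; simp [h] at this
  have hw : Tendsto (fun n => (1 - Complex.exp (-z n)) / z n) atTop (𝓝 1) := by
    have hd : HasDerivAt (fun w : ℂ => 1 - Complex.exp (-w)) 1 0 := by
      have := ((hasDerivAt_neg (0:ℂ)).cexp).const_sub 1
      simpa using this
    have := hd.tendsto_slope.comp (tendsto_nhdsWithin_iff.2 ⟨hz0, Eventually.of_forall hne⟩)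
    refine this.congr (fun n => ?_)
    simp [slope_def_field]
  have hlim : Tendsto (fun n => ((1 - Complex.exp (-z n)) / z n) ^ (-(d:ℂ))) atTop (𝓝 1) := by
    have := hw.cpow (tendsto_const_nhds (x := -(d:ℂ))) (by simp)
    simpa using this
  refine hlim.congr' ?_
  have hre : ∀ᶠ n in atTop, 0 < ((1 - Complex.exp (-z n)) / z n).re := by
    have := (Complex.continuous_re.tendsto 1).comp hw
    exact this.eventually_const_lt (by simp)
  filter_upwards [hre] with n hn
  set w := (1 - Complex.exp (-z n)) / z n with hwdef
  have hw0 : w ≠ 0 := by intro h; simp [h] at hn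
  have e1 : 1 - Complex.exp (-z n) = z n * w := by rw [hwdef, mul_div_cancel₀ _ (hne n)]
  have a1 := abs_lt.1 (Complex.abs_arg_lt_pi_div_two_iff.2 (Or.inl (hz n)))
  have a2 := abs_lt.1 (Complex.abs_arg_lt_pi_div_two_iff.2 (Or.inl hn))
  have hlog : Complex.log (z n * w) = Complex.log (z n) + Complex.log w :=
    (Complex.log_mul_eq_add_log_iff (hne n) hw0).2 ⟨by linarith [a1.1, a2.1], by linarith [a1.2, a2.2]⟩
  rw [e1, Complex.cpow_def_of_ne_zero (hne n), Complex.cpow_def_of_ne_zero (mul_ne_zero (hne n) hw0),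
    Complex.cpow_def_of_ne_zero hw0, hlog, ← Complex.exp_add]
  congr 1; ring

/-- Tauberian lemma (regime `−1 < d < 0`): if `b k ~ (1/Γ(d)) k^{d−1}`, `∑ b k = 0`,
`λ_N > 0`, `λ_N → 0` and `N λ_N → λ* ∈ [0,∞)`, then for each fixed `y ∈ ℝ`,
`(λ_N + iy/N)^d ∑_{k=0}^∞ e^{−(λ_N + iy/N)k} b k → 1` as `N → ∞`. -/
theorem stmt15 (d : ℝ) (hd1 : -1 < d) (hd0 : d < 0) (b : ℕ → ℝ)
    (hb : Tendsto (fun k : ℕ => b k / ((1 / Real.Gamma d) * (k : ℝ) ^ (d - 1)))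
      atTop (nhds 1))
    (hsum : Summable b) (hzero : ∑' k, b k = 0)
    (lam : ℕ → ℝ) (hpos : ∀ N, 0 < lam N)
    (hlam0 : Tendsto lam atTop (nhds 0))
    (lamStar : ℝ) (hlamStar : 0 ≤ lamStar)
    (hNlam : Tendsto (fun N : ℕ => (N : ℝ) * lam N) atTop (nhds lamStar)) :
    ∀ y : ℝ, Tendsto
      (fun N : ℕ =>
        ((lam N : ℂ) + Complex.I * y / N) ^ (d : ℂ) *
          ∑' k : ℕ, Complex.exp (-((lam N : ℂ) + Complex.I * y / N) * k) * (b k : ℂ))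
      atTop (nhds 1) := by
  intro y
  obtain ⟨ha, ho⟩ := coefA_facts d hd1 hd0 b hb hsum
  set z : ℕ → ℂ := fun N => (lam N : ℂ) + Complex.I * y / N with hzdef
  have hz : ∀ n, 0 < (z n).re := by
    intro n
    have : z n = (lam n : ℂ) + ((y / n : ℝ) : ℂ) * Complex.I := by
      simp only [hzdef]; push_cast; ring
    rw [this]; simpa using hpos n
  have hz0 : Tendsto z atTop (𝓝 0) := by
    have h1 : Tendsto (fun n => (lam n : ℂ)) atTop (𝓝 0) := by
      have := (Complex.continuous_ofReal.tendsto 0).comp hlam0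
      simpa [Function.comp_def] using this
    have h2 := tendsto_const_div_atTop_nhds_zero_nat (𝕜 := ℂ) (Complex.I * y)
    simpa using h1.add h2
  have hbs : HasSum b 0 := hzero ▸ hsum.hasSum
  set e : ℕ → ℝ := fun k => b k - coefA d k with hedef
  have he : HasSum e 0 := by simpa using hbs.sub ha
  have herr : Tendsto (fun n => z n ^ (d:ℂ) * ∑' k : ℕ, Complex.exp (-z n * k) * (e k : ℂ))
      atTop (𝓝 0) := by
    rw [Metric.tendsto_nhds]
    intro ε hε
    obtain ⟨K, hK⟩ := eventually_atTop.1 (ho.def (show 0 < ε / 6 by positivity))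
    have hp : Tendsto (fun n => (∑ k ∈ Finset.range K, k * |e k|) * ‖z n‖ ^ (1 + d)) atTop (𝓝 0) := by
      have h1 := (hz0.norm.rpow_const (p := 1 + d) (Or.inr (by linarith))).const_mul
        (∑ k ∈ Finset.range K, k * |e k|)
      rw [norm_zero, Real.zero_rpow (by linarith), mul_zero] at h1
      exact h1
    filter_upwards [hp.eventually_lt_const (show 0 < ε / 2 by positivity)] with n hn
    rw [dist_zero_right]
    have := err_bound d hd1 hd0 ha e he (ε / 6) (by positivity) K (fun k hk => hK k hk) (z n) (hz n)
    linarith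
  have hm := (main_part d z hz hz0).add herr
  rw [add_zero] at hm
  refine hm.congr (fun n => ?_)
  have hlt : ‖Complex.exp (-z n)‖ < 1 := by
    rw [Complex.norm_exp]; simpa using hz n
  have hA := coefA_hasSum d _ hlt
  have hE : Summable (fun k : ℕ => Complex.exp (-z n * k) * (e k : ℂ)) := by
    have hee : Summable (fun k => ‖(e k : ℂ)‖) := by
      simpa using he.summable.abs
    refine Summable.of_norm_bounded hee (fun k => ?_)
    rw [norm_mul, mul_comm (-z n), Complex.exp_nat_mul, norm_pow]
    exact mul_le_of_le_one_left (norm_nonneg _) (pow_le_one₀ (norm_nonneg _) hlt.le)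
  have hB := hA.add hE.hasSum
  rw [← mul_add, ← hB.tsum_eq]
  congr 2
  ext k
  rw [mul_comm (-z n), Complex.exp_nat_mul, hedef]
  push_cast
  ring
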